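/- If the general linear group GL(V) of an n-dimensional real vector space V has an open orbit on Λ^p V*, then it also has an open orbit on Λ^{n-p} V*. -/

import Mathlib

noncomputable section

/-- The orbit of a (continuous) alternating `p`-form `ρ` on `V = ℝⁿ` under the natural
action of `GL(V)` (by pullback along invertible linear maps). -/
def glOrbit (n p : ℕ) (ρ : (EuclideanSpace ℝ (Fin n)) [⋀^Fin p]→L[ℝ] ℝ) :
    Set ((EuclideanSpace ℝ (Fin n)) [⋀^Fin p]→L[ℝ] ℝ) :=
  {σ | ∃ g : EuclideanSpace ℝ (Fin n) ≃L[ℝ] EuclideanSpace ℝ (Fin n),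
    σ = ρ.compContinuousLinearMap
      (g : EuclideanSpace ℝ (Fin n) →L[ℝ] EuclideanSpace ℝ (Fin n))}

/-!
A basis of `V` gives a Hodge star operator `⋆ : Λ^p V* → Λ^q V*`, `q = n - p`. It is a linear
isomorphism, and it intertwines the action of a matrix with that of its inverse transpose, up to
multiplication by the determinant. Since `q > 0`, a positive factor is absorbed by a homothety, so
`⋆` maps `{g • ρ | 0 < det g}` into the orbit of `⋆ρ`; for even `q` a negative factor may leave
that orbit. If the orbit of `ρ` is open, then `g ↦ g • ρ` is an open map, by the open mapping
theorem for actions of σ-compact groups. Hence the orbit of `⋆ρ` contains a nonempty open set, and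
its translates cover the orbit.
-/

open Module MulAction
open scoped Nat

section Algebra

variable {R M N : Type*} [CommRing R] [AddCommGroup M] [Module R M] [AddCommGroup N] [Module R N]

section TransposeExpansion

variable {ι α : Type*} [Fintype ι] [DecidableEq ι] [Fintype α] [DecidableEq α]

theorem multilinearMap_toLinAlgEquiv_comp_basis (b : Basis ι R M) (A : Matrix ι ι R)
    (μ : MultilinearMap R (fun _ : α => M) N) (s : α → ι) :
    μ (Matrix.toLinAlgEquiv b A ∘ b ∘ s) =
      ∑ r : α → ι, (∏ i, A (r i) (s i)) • μ (b ∘ r) := by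
  simp only [Function.comp_def, Matrix.toLinAlgEquiv_self, MultilinearMap.map_sum,
    MultilinearMap.map_smul_univ]

theorem sum_map_toLinAlgEquiv_smul_eq_sum_smul_map_transpose (b : Basis ι R M) (A : Matrix ι ι R)
    (ρ : MultilinearMap R (fun _ : α => M) R) (μ : MultilinearMap R (fun _ : α => M) N) :
    ∑ s : α → ι, ρ (Matrix.toLinAlgEquiv b A ∘ b ∘ s) • μ (b ∘ s) =
      ∑ s : α → ι, ρ (b ∘ s) • μ (Matrix.toLinAlgEquiv b A.transpose ∘ b ∘ s) := by
  simp only [multilinearMap_toLinAlgEquiv_comp_basis, Matrix.transpose_apply, Finset.sum_smul,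
    Finset.smul_sum]
  rw [Finset.sum_comm]
  simp only [smul_smul, smul_eq_mul, mul_comm]

end TransposeExpansion

variable {α β : Type*}

theorem exists_perm_comp_inl_eq [Finite α] (σ : Equiv.Perm (α ⊕ β)) {s : α → α ⊕ β}
    (hs : Function.Injective (Sum.elim s (σ ∘ Sum.inr))) :
    ∃ τ : Equiv.Perm α, σ ∘ Sum.inl ∘ τ = s := by
  have mem_range_inl (i : α) : ∃ j, σ (Sum.inl j) = s i := by
    obtain ⟨j | j, hj⟩ := σ.surjective (s i)
    · exact ⟨j, hj⟩
    · exact absurd (hs (a₁ := Sum.inl i) (a₂ := Sum.inr j) hj.symm) Sum.inl_ne_inr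
  choose τ hτ using mem_range_inl
  have τ_injective : Function.Injective τ := fun i j hij =>
    Sum.inl_injective (hs (by simp only [Sum.elim_inl, ← hτ, hij]))
  exact ⟨Equiv.ofBijective τ (Finite.injective_iff_bijective.1 τ_injective), funext hτ⟩

variable [Fintype α] [Fintype β] [DecidableEq α] [DecidableEq β]

/-- The Hodge star operator from `α`-indexed to `β`-indexed forms, for the inner product and the
volume form that make the basis `b` orthonormal and positively oriented. The sum runs over all
tuples of basis vectors rather than the increasing ones, so this is `(card α)!` times the usual
normalization. -/
def hodgeStar (b : Basis (α ⊕ β) R M) : (M [⋀^α]→ₗ[R] R) →ₗ[R] (M [⋀^β]→ₗ[R] R) where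
  toFun ρ :=
    { ∑ s : α → α ⊕ β, ρ (b ∘ s) • b.det.toMultilinearMap.currySum (b ∘ s) with
      map_eq_zero_of_eq' w i j hw hij := by
        have det_eq_zero (s : α → α ⊕ β) : b.det (Sum.elim (b ∘ s) w) = 0 :=
          b.det.map_eq_zero_of_eq _ (i := Sum.inr i) (j := Sum.inr j) hw
            (Sum.inr_injective.ne hij)
        simp [MultilinearMap.currySum_apply', det_eq_zero] }
  map_add' ρ σ := by
    ext w
    simp [add_mul, Finset.sum_add_distrib]
  map_smul' c ρ := by
    ext w
    simp [mul_assoc, Finset.mul_sum]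

theorem hodgeStar_apply (b : Basis (α ⊕ β) R M) (ρ : M [⋀^α]→ₗ[R] R) (w : β → M) :
    hodgeStar b ρ w = ∑ s : α → α ⊕ β, ρ (b ∘ s) • b.det (Sum.elim (b ∘ s) w) := by
  simp [hodgeStar, MultilinearMap.currySum_apply']

theorem hodgeStar_compLinearMap_transpose (b : Basis (α ⊕ β) R M)
    (A : Matrix (α ⊕ β) (α ⊕ β) R) (ρ : M [⋀^α]→ₗ[R] R) :
    (hodgeStar b (ρ.compLinearMap (Matrix.toLinAlgEquiv b A))).compLinearMap
      (Matrix.toLinAlgEquiv b A.transpose) = A.det • hodgeStar b ρ := by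
  ext w
  set T := Matrix.toLinAlgEquiv b A.transpose
  have det_comp_transpose (s : α → α ⊕ β) :
      b.det (Sum.elim (T ∘ b ∘ s) (T ∘ w)) = A.det • b.det (Sum.elim (b ∘ s) w) := by
    rw [← Sum.comp_elim, b.det_comp, ← A.det_transpose, smul_eq_mul]
    exact congrArg (· * _) (LinearMap.det_toLin b A.transpose)
  calc hodgeStar b (ρ.compLinearMap (Matrix.toLinAlgEquiv b A)) (T ∘ w)
    _ = ∑ s : α → α ⊕ β, ρ (Matrix.toLinAlgEquiv b A ∘ b ∘ s) •
          b.det (Sum.elim (b ∘ s) (T ∘ w)) := hodgeStar_apply ..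
    _ = ∑ s : α → α ⊕ β, ρ (b ∘ s) • b.det (Sum.elim (T ∘ b ∘ s) (T ∘ w)) := by
      simpa only [sum_apply, smul_apply] using! congrArg (· (T ∘ w)) <|
        sum_map_toLinAlgEquiv_smul_eq_sum_smul_map_transpose b A ρ.toMultilinearMap
          b.det.toMultilinearMap.currySum
    _ = A.det • hodgeStar b ρ w := by
      simp only [det_comp_transpose, hodgeStar_apply, Finset.smul_sum, smul_comm A.det]

theorem hodgeStar_apply_basis_comp_perm (b : Basis (α ⊕ β) R M) (ρ : M [⋀^α]→ₗ[R] R)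
    (σ : Equiv.Perm (α ⊕ β)) :
    hodgeStar b ρ (b ∘ σ ∘ Sum.inr) =
      (Fintype.card α)! • Equiv.Perm.sign σ • ρ (b ∘ σ ∘ Sum.inl) := by
  let tuple (τ : Equiv.Perm α) : α → α ⊕ β := σ ∘ Sum.inl ∘ τ
  have tuple_injective : Function.Injective tuple := fun τ τ' h =>
    DFunLike.coe_injective <| Sum.inl_injective.comp_left <| σ.injective.comp_left h
  have det_eq_zero (s : α → α ⊕ β) (hs : s ∉ Set.range tuple) :
      b.det (Sum.elim (b ∘ s) (b ∘ σ ∘ Sum.inr)) = 0 := by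
    refine b.det.map_eq_zero_of_not_injective _ fun h => hs ?_
    rw [← Sum.comp_elim] at h
    exact exists_perm_comp_inl_eq σ h.of_comp
  have term_eq (τ : Equiv.Perm α) :
      ρ (b ∘ tuple τ) • b.det (Sum.elim (b ∘ tuple τ) (b ∘ σ ∘ Sum.inr)) =
        Equiv.Perm.sign σ • ρ (b ∘ σ ∘ Sum.inl) := by
    have ρ_eq : ρ (b ∘ tuple τ) = Equiv.Perm.sign τ • ρ (b ∘ σ ∘ Sum.inl) :=
      ρ.map_perm (b ∘ σ ∘ Sum.inl) τ
    have sign_eq : Equiv.Perm.sign (σ * τ.sumCongr (1 : Equiv.Perm β)) =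
        Equiv.Perm.sign σ * Equiv.Perm.sign τ := by
      rw [map_mul, Equiv.Perm.sign_sumCongr, map_one, mul_one]
    have det_eq : b.det (Sum.elim (b ∘ tuple τ) (b ∘ σ ∘ Sum.inr)) =
        (Equiv.Perm.sign σ * Equiv.Perm.sign τ) • (1 : R) := by
      rw [← sign_eq, ← b.det_self, ← AlternatingMap.map_perm]
      exact congrArg b.det (funext fun | .inl _ => rfl | .inr _ => rfl)
    rw [ρ_eq, det_eq, smul_eq_mul, smul_mul_smul_comm, mul_one, mul_left_comm,
      Int.units_mul_self, mul_one]
  rw [hodgeStar_apply, ← Fintype.sum_of_injective tuple tuple_injective _ _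
    (fun s hs => by rw [det_eq_zero s hs, smul_zero]) fun τ => rfl]
  simp only [term_eq, Finset.sum_const, Finset.card_univ, Fintype.card_perm]

/-- The reordered basis has relative orientation `(-1) ^ (p * q)`, which absorbs the usual sign of
`⋆⋆`. -/
theorem hodgeStar_reindex_sumComm_hodgeStar (b : Basis (α ⊕ β) R M) (ρ : M [⋀^α]→ₗ[R] R) :
    hodgeStar (b.reindex (Equiv.sumComm α β)) (hodgeStar b ρ) =
      ((Fintype.card β)! * (Fintype.card α)!) • ρ := by
  refine Basis.ext_alternating b fun t ht => ?_
  obtain ⟨σ, hσ⟩ := Equiv.Perm.exists_extending_pair Sum.inl t Sum.inl_injective ht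
  have t_eq : (fun i => b (t i)) = b ∘ σ ∘ Sum.inl := funext fun i => congrArg b (hσ i).symm
  let σ' : Equiv.Perm (β ⊕ α) := (Equiv.sumComm α β).permCongr σ
  have inr_eq : b ∘ σ ∘ Sum.inl = b.reindex (Equiv.sumComm α β) ∘ σ' ∘ Sum.inr := by
    ext i; simp [σ']
  have inl_eq : b.reindex (Equiv.sumComm α β) ∘ σ' ∘ Sum.inl = b ∘ σ ∘ Sum.inr := by
    ext i; simp [σ']
  rw [t_eq, AlternatingMap.smul_apply]
  conv_lhs => rw [inr_eq]
  rw [hodgeStar_apply_basis_comp_perm, inl_eq, hodgeStar_apply_basis_comp_perm,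
    Equiv.Perm.sign_permCongr, smul_comm (Equiv.Perm.sign σ), smul_smul, smul_smul,
    Int.units_mul_self, one_smul]

theorem hodgeStar_surjective {K V : Type*} [Field K] [CharZero K] [AddCommGroup V] [Module K V]
    (b : Basis (α ⊕ β) K V) : Function.Surjective (hodgeStar b) := by
  intro σ
  let b' := b.reindex (Equiv.sumComm α β)
  let c : K := ((Fintype.card α)! * (Fintype.card β)! : ℕ)
  have c_ne_zero : c ≠ 0 := Nat.cast_ne_zero.2 (by positivity)
  have star_star : hodgeStar b (hodgeStar b' σ) = c • σ := by
    have b_eq : b'.reindex (Equiv.sumComm β α) = b := by ext i; simp [b']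
    rw [← b_eq, hodgeStar_reindex_sumComm_hodgeStar, Nat.cast_smul_eq_nsmul]
  exact ⟨c⁻¹ • hodgeStar b' σ, by rw [map_smul, star_star, inv_smul_smul₀ c_ne_zero]⟩

end Algebra

section OpenOrbits

variable {G X : Type*} [Group G] [TopologicalSpace X] [MulAction G X] {x : X}

theorem isOpen_orbit_of_nonempty_interior [ContinuousConstSMul G X]
    (h : (interior (orbit G x)).Nonempty) : IsOpen (orbit G x) := by
  obtain ⟨y, hy⟩ := h
  refine isOpen_iff_mem_nhds.2 fun z hz => ?_
  obtain ⟨g, rfl⟩ : z ∈ orbit G y := orbit_eq_iff.2 (interior_subset hy) ▸ hz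
  rw [← smul_orbit g x]
  exact smul_mem_nhds_smul g (mem_interior_iff_mem_nhds.1 hy)

theorem isOpenMap_smul_of_isOpen_orbit [TopologicalSpace G] [IsTopologicalGroup G]
    [SigmaCompactSpace G] [BaireSpace X] [T2Space X] [ContinuousSMul G X]
    (hx : IsOpen (orbit G x)) : IsOpenMap fun g : G => g • x := by
  have : BaireSpace (orbit G x) := hx.baireSpace
  have : ContinuousSMul G (orbit G x) :=
    ⟨(continuous_fst.smul (continuous_subtype_val.comp continuous_snd)).subtype_mk _⟩
  exact hx.isOpenMap_subtype_val.comp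
    (isOpenMap_smul_of_sigmaCompact (⟨x, mem_orbit_self x⟩ : orbit G x))

end OpenOrbits

theorem continuous_multilinearMap_of_finiteDimensional {𝕜 α W : Type*} {V : α → Type*}
    [NontriviallyNormedField 𝕜] [CompleteSpace 𝕜] [Finite α]
    [∀ i, AddCommGroup (V i)] [∀ i, Module 𝕜 (V i)] [∀ i, TopologicalSpace (V i)]
    [∀ i, IsTopologicalAddGroup (V i)] [∀ i, ContinuousSMul 𝕜 (V i)] [∀ i, T2Space (V i)]
    [∀ i, FiniteDimensional 𝕜 (V i)]
    [AddCommGroup W] [Module 𝕜 W] [TopologicalSpace W] [ContinuousAdd W] [ContinuousSMul 𝕜 W]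
    (μ : MultilinearMap 𝕜 V W) : Continuous μ := by
  classical
  cases nonempty_fintype α
  let b (i : α) := finBasis 𝕜 (V i)
  have expansion (v : ∀ i, V i) :
      μ v = ∑ r : ∀ i, Fin (finrank 𝕜 (V i)),
        (∏ i, (b i).coord (r i) (v i)) • μ fun i => b i (r i) := by
    conv_lhs => rw [← funext fun i => (b i).sum_repr (v i)]
    simp only [MultilinearMap.map_sum, MultilinearMap.map_smul_univ, Basis.coord_apply]
  have coord_continuous (i : α) (j : Fin (finrank 𝕜 (V i))) : Continuous ((b i).coord j) :=
    LinearMap.continuous_of_finiteDimensional _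
  rw [funext expansion]
  fun_prop

theorem finiteDimensional_continuousAlternatingMap {𝕜 V α : Type*} [NontriviallyNormedField 𝕜]
    [AddCommGroup V] [Module 𝕜 V] [TopologicalSpace V] [FiniteDimensional 𝕜 V] [Finite α] :
    FiniteDimensional 𝕜 (V [⋀^α]→L[𝕜] 𝕜) :=
  Module.Finite.of_injective
    (AlternatingMap.toMultilinearMapLM ∘ₗ ContinuousAlternatingMap.toAlternatingMapLinear)
    (AlternatingMap.coe_multilinearMap_injective.comp
      ContinuousAlternatingMap.toAlternatingMap_injective)

section ContinuousHodgeStar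

variable {𝕜 V α β : Type*} [NontriviallyNormedField 𝕜] [CompleteSpace 𝕜]
  [AddCommGroup V] [Module 𝕜 V] [TopologicalSpace V] [IsTopologicalAddGroup V]
  [ContinuousSMul 𝕜 V] [T2Space V] [FiniteDimensional 𝕜 V]
  [Fintype α] [Fintype β] [DecidableEq α] [DecidableEq β]

/-- The Hodge star operator `hodgeStar b` on continuous forms. -/
def continuousHodgeStar (b : Basis (α ⊕ β) 𝕜 V) :
    (V [⋀^α]→L[𝕜] 𝕜) →ₗ[𝕜] (V [⋀^β]→L[𝕜] 𝕜) where
  toFun ρ :=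
    { hodgeStar b ρ.toAlternatingMap with
      cont := continuous_multilinearMap_of_finiteDimensional _ }
  map_add' ρ σ := ContinuousAlternatingMap.toAlternatingMap_injective <|
    map_add (hodgeStar b) ρ.toAlternatingMap σ.toAlternatingMap
  map_smul' c ρ := ContinuousAlternatingMap.toAlternatingMap_injective <|
    map_smul (hodgeStar b) c ρ.toAlternatingMap

theorem isOpenMap_continuousHodgeStar [CharZero 𝕜] (b : Basis (α ⊕ β) 𝕜 V) :
    IsOpenMap (continuousHodgeStar b) := by
  have := finiteDimensional_continuousAlternatingMap (𝕜 := 𝕜) (V := V) (α := β)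
  refine LinearMap.isOpenMap_of_finiteDimensional _ fun σ => ?_
  obtain ⟨ρ, hρ⟩ := hodgeStar_surjective b σ.toAlternatingMap
  exact ⟨{ ρ with cont := continuous_multilinearMap_of_finiteDimensional _ },
    ContinuousAlternatingMap.toAlternatingMap_injective hρ⟩

end ContinuousHodgeStar

section GeneralLinearGroup

variable {𝕜 V α : Type*} [NontriviallyNormedField 𝕜] [NormedAddCommGroup V] [NormedSpace 𝕜 V]

/-- The natural left action of `GL(V)` on scalar-valued forms, by pullback along the inverse. -/
instance generalLinearActionOnForms : MulAction (V →L[𝕜] V)ˣ (V [⋀^α]→L[𝕜] 𝕜) where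
  smul g ρ := ρ.compContinuousLinearMap ↑g⁻¹
  one_smul _ := rfl
  mul_smul _ _ _ := rfl

instance [Finite α] : ContinuousSMul (V →L[𝕜] V)ˣ (V [⋀^α]→L[𝕜] 𝕜) where
  continuous_smul := by
    cases nonempty_fintype α
    have inv_continuous :
        Continuous fun x : (V →L[𝕜] V)ˣ × (V [⋀^α]→L[𝕜] 𝕜) => (↑x.1⁻¹ : V →L[𝕜] V) :=
      Units.continuous_val.comp continuous_fst.inv
    exact (ContinuousAlternatingMap.continuous_compContinuousLinearMapCLM.comp
      inv_continuous).clm_apply continuous_snd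

instance [ProperSpace 𝕜] [FiniteDimensional 𝕜 V] : SigmaCompactSpace (V →L[𝕜] V)ˣ := by
  have : CompleteSpace V := FiniteDimensional.complete 𝕜 V
  have : ProperSpace (V →L[𝕜] V) := FiniteDimensional.proper 𝕜 _
  have val_isOpenEmbedding : Topology.IsOpenEmbedding (Units.val : (V →L[𝕜] V)ˣ → V →L[𝕜] V) :=
    Units.isOpenEmbedding_val
  have := val_isOpenEmbedding.locallyCompactSpace
  have := val_isOpenEmbedding.isEmbedding.secondCountableTopology
  infer_instance

theorem exists_smul_continuousHodgeStar_smul [CompleteSpace 𝕜] [FiniteDimensional 𝕜 V]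
    {β : Type*} [Fintype α] [Fintype β] [DecidableEq α] [DecidableEq β]
    (b : Basis (α ⊕ β) 𝕜 V) (g : (V →L[𝕜] V)ˣ) (ρ : V [⋀^α]→L[𝕜] 𝕜) :
    ∃ h : (V →L[𝕜] V)ˣ, h • continuousHodgeStar b (g • ρ) =
      (↑g⁻¹ : V →L[𝕜] V).det • continuousHodgeStar b ρ := by
  let f : V →ₗ[𝕜] V := (↑g⁻¹ : V →L[𝕜] V)
  let A := LinearMap.toMatrixAlgEquiv b f
  have toLin_A : Matrix.toLinAlgEquiv b A = f := Matrix.toLinAlgEquiv_toMatrixAlgEquiv b f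
  have det_A : A.det = f.det := LinearMap.det_toMatrix b f
  have f_isUnit : IsUnit f := g⁻¹.isUnit.map ContinuousLinearMap.toLinearMapRingHom
  have transpose_isUnit : IsUnit A.transpose :=
    A.isUnit_transpose.2 (f_isUnit.map (LinearMap.toMatrixAlgEquiv b))
  obtain ⟨h, hh⟩ := (transpose_isUnit.map (Matrix.toLinAlgEquiv b)).map
    (Module.End.toContinuousLinearMap V)
  refine ⟨h⁻¹, ContinuousAlternatingMap.toAlternatingMap_injective ?_⟩
  calc (continuousHodgeStar b (g • ρ)).toAlternatingMap.compLinearMap (h : V →L[𝕜] V)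
    _ = (hodgeStar b (ρ.toAlternatingMap.compLinearMap (Matrix.toLinAlgEquiv b A))).compLinearMap
          (Matrix.toLinAlgEquiv b A.transpose) := by rw [hh, toLin_A]; rfl
    _ = A.det • hodgeStar b ρ.toAlternatingMap := hodgeStar_compLinearMap_transpose ..
    _ = f.det • hodgeStar b ρ.toAlternatingMap := by rw [det_A]

theorem smul_mem_orbit_of_pos {V β : Type*} [NormedAddCommGroup V] [NormedSpace ℝ V] [Finite β]
    [Nonempty β] {c : ℝ} (hc : 0 < c) (σ : V [⋀^β]→L[ℝ] ℝ) :
    c • σ ∈ orbit (V →L[ℝ] V)ˣ σ := by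
  cases nonempty_fintype β
  let r : ℝ := c ^ (Fintype.card β : ℝ)⁻¹
  have r_pow : r ^ Fintype.card β = c := Real.rpow_inv_natCast_pow hc.le Fintype.card_ne_zero
  have r_ne_zero : r ≠ 0 := (Real.rpow_pos_of_pos hc _).ne'
  let homothety : (V →L[ℝ] V)ˣ := Units.map (algebraMap ℝ (V →L[ℝ] V)) (Units.mk0 r r_ne_zero)
  refine ⟨homothety⁻¹, ?_⟩
  ext v
  calc σ (fun i => r • v i)
    _ = (∏ _i : β, r) • σ v := σ.toMultilinearMap.map_smul_univ (fun _ => r) v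
    _ = (c • σ) v := by rw [Finset.prod_const, Finset.card_univ, r_pow]; rfl

end GeneralLinearGroup

section ComplementaryDegree

variable {V α β : Type*} [NormedAddCommGroup V] [NormedSpace ℝ V] [FiniteDimensional ℝ V]
  [Fintype α] [Fintype β]

theorem continuousHodgeStar_smul_mem_orbit [DecidableEq α] [DecidableEq β] [Nonempty β]
    (b : Basis (α ⊕ β) ℝ V) (ρ : V [⋀^α]→L[ℝ] ℝ)
    {g : (V →L[ℝ] V)ˣ} (hg : 0 < (↑g⁻¹ : V →L[ℝ] V).det) :
    continuousHodgeStar b (g • ρ) ∈ orbit (V →L[ℝ] V)ˣ (continuousHodgeStar b ρ) := by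
  obtain ⟨h, hh⟩ := exists_smul_continuousHodgeStar_smul b g ρ
  rw [← orbit_eq_iff, ← orbit_smul h, hh, orbit_eq_iff]
  exact smul_mem_orbit_of_pos hg _

theorem isOpen_orbit_continuousHodgeStar [DecidableEq α] [DecidableEq β] [Nonempty β]
    (b : Basis (α ⊕ β) ℝ V) {ρ : V [⋀^α]→L[ℝ] ℝ}
    (hρ : IsOpen (orbit (V →L[ℝ] V)ˣ ρ)) :
    IsOpen (orbit (V →L[ℝ] V)ˣ (continuousHodgeStar b ρ)) := by
  let P : Set (V →L[ℝ] V)ˣ := {g | 0 < (↑g⁻¹ : V →L[ℝ] V).det}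
  have P_isOpen : IsOpen P := isOpen_lt continuous_const
    (ContinuousLinearMap.continuous_det.comp (Units.continuous_val.comp continuous_inv))
  have one_mem : 1 ∈ P := by simp [P, ContinuousLinearMap.det]
  have image_isOpen : IsOpen ((fun g => continuousHodgeStar b (g • ρ)) '' P) :=
    ((isOpenMap_continuousHodgeStar b).comp (isOpenMap_smul_of_isOpen_orbit hρ)) P P_isOpen
  have image_subset : (fun g => continuousHodgeStar b (g • ρ)) '' P ⊆
      orbit (V →L[ℝ] V)ˣ (continuousHodgeStar b ρ) :=
    Set.image_subset_iff.2 fun g hg => continuousHodgeStar_smul_mem_orbit b ρ hg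
  exact isOpen_orbit_of_nonempty_interior
    ⟨_, interior_maximal image_subset image_isOpen (Set.mem_image_of_mem _ one_mem)⟩

theorem open_orbit_complementary_degree_general [Nonempty β]
    (hcard : Fintype.card α + Fintype.card β = finrank ℝ V)
    (h : ∃ ρ : V [⋀^α]→L[ℝ] ℝ, IsOpen (orbit (V →L[ℝ] V)ˣ ρ)) :
    ∃ σ : V [⋀^β]→L[ℝ] ℝ, IsOpen (orbit (V →L[ℝ] V)ˣ σ) := by
  classical
  obtain ⟨ρ, hρ⟩ := h
  have b : Basis (α ⊕ β) ℝ V :=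
    (finBasis ℝ V).reindex (Fintype.equivOfCardEq (by simp [hcard]))
  exact ⟨_, isOpen_orbit_continuousHodgeStar b hρ⟩

end ComplementaryDegree

theorem glOrbit_eq_orbit (n p : ℕ) (ρ : (EuclideanSpace ℝ (Fin n)) [⋀^Fin p]→L[ℝ] ℝ) :
    glOrbit n p ρ =
      orbit (EuclideanSpace ℝ (Fin n) →L[ℝ] EuclideanSpace ℝ (Fin n))ˣ ρ := by
  let e := ContinuousLinearEquiv.unitsEquiv ℝ (EuclideanSpace ℝ (Fin n))
  ext σ
  constructor
  · rintro ⟨g, rfl⟩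
    exact ⟨e.symm g⁻¹, rfl⟩
  · rintro ⟨g, rfl⟩
    exact ⟨e g⁻¹, rfl⟩

/-- If `GL(V)` has an open orbit on `Λ^p V*` (i.e. some `p`-form is stable),
then it also has an open orbit on `Λ^{n-p} V*`. -/
theorem open_orbit_complementary_degree (n p : ℕ) (hp : 0 < p) (hpn : p < n)
    (h : ∃ ρ : (EuclideanSpace ℝ (Fin n)) [⋀^Fin p]→L[ℝ] ℝ, IsOpen (glOrbit n p ρ)) :
    ∃ σ : (EuclideanSpace ℝ (Fin n)) [⋀^Fin (n - p)]→L[ℝ] ℝ, IsOpen (glOrbit n (n - p) σ) := by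
  simp only [glOrbit_eq_orbit] at h ⊢
  have : Nonempty (Fin (n - p)) := ⟨⟨0, Nat.sub_pos_of_lt hpn⟩⟩
  exact open_orbit_complementary_degree_general (by simp [Nat.add_sub_cancel' hpn.le]) h
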